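/- arXiv:1112.4071 — 3 statements merged into one kernel-verified Lean document; each statement's English description precedes it below -/
import Mathlib

section
/- Let λ_1, λ_2, … be distinct real numbers with λ_j > −1/2, and define K_n(x) = ∑_{j=1}^n a_{j,n} x^{λ_j} on (0,1], where a_{j,n} = (∏_{l=1}^n (λ_j + λ_l + 1)) / (∏_{l=1, l≠j}^n (λ_j − λ_l)), with the convention K_0 ≡ 0. Then for every n ≥ 1 and every x ∈ (0,1] the sequence (K_n) satisfies the integro-difference equation K_n(x) = K_{n−1}(x) + (2λ_n + 1) x^{λ_n} ( 1 − ∫_x^1 u^{−λ_n − 1} K_{n−1}(u) du ). -/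
open Finset MeasureTheory intervalIntegral

/-- The coefficients `a_{j,n}` of the Müntz polynomial `K_n`. -/
noncomputable def muntzA (lam : ℕ → ℝ) (n j : ℕ) : ℝ :=
  (∏ l ∈ Finset.Icc 1 n, (lam j + lam l + 1)) /
    (∏ l ∈ (Finset.Icc 1 n).erase j, (lam j - lam l))

/-- The Müntz polynomial `K_n(x) = ∑_{j=1}^n a_{j,n} x^{λ_j}`. -/
noncomputable def muntzK (lam : ℕ → ℝ) (n : ℕ) (x : ℝ) : ℝ :=
  ∑ j ∈ Finset.Icc 1 n, muntzA lam n j * x ^ lam j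

theorem muntzA_succ_of_le (lam : ℕ → ℝ) {m j : ℕ} (hj : j ≤ m) :
    muntzA lam (m + 1) j =
      muntzA lam m j * ((lam j + lam (m + 1) + 1) / (lam j - lam (m + 1))) := by
  have hne : m + 1 ≠ j := by omega
  unfold muntzA
  rw [Finset.prod_Icc_succ_top (by omega), ← Finset.insert_Icc_right_eq_Icc_add_one (by omega),
    Finset.erase_insert_of_ne hne, Finset.prod_insert (by simp), mul_comm (lam j - lam (m + 1)),
    mul_div_mul_comm]

theorem muntzA_succ_self (lam : ℕ → ℝ) (m : ℕ) :
    muntzA lam (m + 1) (m + 1) =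
      (2 * lam (m + 1) + 1) *
        ∏ l ∈ Finset.Icc 1 m, (lam (m + 1) + lam l + 1) / (lam (m + 1) - lam l) := by
  unfold muntzA
  rw [Finset.prod_Icc_succ_top (by omega), ← Finset.insert_Icc_right_eq_Icc_add_one (by omega),
    Finset.erase_insert (by simp), Finset.prod_div_distrib]
  ring

/-- Partial fraction expansion of `∏ l, (t + λ_l + 1) / (t - λ_l)`. -/
theorem prod_div_eq_one_add_sum_muntzA (lam : ℕ → ℝ)
    (hdist : ∀ j k, 1 ≤ j → 1 ≤ k → j ≠ k → lam j ≠ lam k) (m : ℕ) (t : ℝ)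
    (ht : ∀ j ∈ Finset.Icc 1 m, t ≠ lam j) :
    ∏ l ∈ Finset.Icc 1 m, (t + lam l + 1) / (t - lam l) =
      1 + ∑ j ∈ Finset.Icc 1 m, muntzA lam m j / (t - lam j) := by
  induction m generalizing t with
  | zero => simp
  | succ m ih =>
    have hlam : ∀ j ∈ Finset.Icc 1 m, lam (m + 1) ≠ lam j := fun j hj => by
      rw [Finset.mem_Icc] at hj
      exact hdist _ _ (by omega) hj.1 (by omega)
    have ht' : ∀ j ∈ Finset.Icc 1 m, t ≠ lam j := fun j hj => by
      rw [Finset.mem_Icc] at hj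
      exact ht j (Finset.mem_Icc.2 ⟨hj.1, by omega⟩)
    have htm : t - lam (m + 1) ≠ 0 := sub_ne_zero.2 (ht _ (by simp))
    rw [Finset.prod_Icc_succ_top (by omega), Finset.sum_Icc_succ_top (by omega), ih t ht',
      muntzA_succ_self, ih _ hlam]
    have key : ∑ j ∈ Finset.Icc 1 m, muntzA lam (m + 1) j / (t - lam j) =
        (t + lam (m + 1) + 1) / (t - lam (m + 1)) *
            ∑ j ∈ Finset.Icc 1 m, muntzA lam m j / (t - lam j) -
          (2 * lam (m + 1) + 1) / (t - lam (m + 1)) *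
            ∑ j ∈ Finset.Icc 1 m, muntzA lam m j / (lam (m + 1) - lam j) := by
      rw [Finset.mul_sum, Finset.mul_sum, ← Finset.sum_sub_distrib]
      refine Finset.sum_congr rfl fun j hj => ?_
      rw [muntzA_succ_of_le lam (Finset.mem_Icc.1 hj).2]
      have h1 := sub_ne_zero.2 (hlam j hj)
      have h2 := sub_ne_zero.2 (hlam j hj).symm
      have h3 := sub_ne_zero.2 (ht' j hj)
      field_simp
      ring
    rw [key]
    field_simp
    ring

theorem integral_rpow_mul_muntzK (lam : ℕ → ℝ) (m : ℕ) {c : ℝ}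
    (hc : ∀ j ∈ Finset.Icc 1 m, c ≠ lam j) {x : ℝ} (hx : 0 < x) :
    ∫ u in x..(1 : ℝ), u ^ (-c - 1) * muntzK lam m u =
      ∑ j ∈ Finset.Icc 1 m, muntzA lam m j * ((1 - x ^ (lam j - c)) / (lam j - c)) := by
  have hpos : ∀ u ∈ Set.uIcc x 1, 0 < u := fun u hu =>
    (lt_min hx one_pos).trans_le hu.1
  have h0 : (0 : ℝ) ∉ Set.uIcc x 1 := fun h => (hpos 0 h).false
  have hcongr : ∫ u in x..(1 : ℝ), u ^ (-c - 1) * muntzK lam m u =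
      ∫ u in x..(1 : ℝ), ∑ j ∈ Finset.Icc 1 m, muntzA lam m j * u ^ (lam j - c - 1) := by
    refine intervalIntegral.integral_congr fun u hu => ?_
    simp only [muntzK, Finset.mul_sum]
    refine Finset.sum_congr rfl fun j _ => ?_
    rw [mul_left_comm, ← Real.rpow_add (hpos u hu)]
    ring_nf
  rw [hcongr, intervalIntegral.integral_finsetSum fun j _ =>
    (intervalIntegral.intervalIntegrable_rpow (Or.inr h0)).const_mul _]
  refine Finset.sum_congr rfl fun j hj => ?_
  have hne : lam j - c - 1 ≠ -1 := fun h => hc j hj (by linarith)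
  rw [intervalIntegral.integral_const_mul, integral_rpow (Or.inr ⟨hne, h0⟩), Real.one_rpow,
    sub_add_cancel]

theorem muntzK_integro_difference (lam : ℕ → ℝ)
    (hpos : ∀ j, 1 ≤ j → lam j > -(1/2 : ℝ))
    (hdist : ∀ j k, 1 ≤ j → 1 ≤ k → j ≠ k → lam j ≠ lam k) :
    ∀ n, 1 ≤ n → ∀ x ∈ Set.Ioc (0:ℝ) 1,
      muntzK lam n x =
        muntzK lam (n - 1) x +
          (2 * lam n + 1) * x ^ lam n *
            (1 - ∫ u in x..(1:ℝ), u ^ (-(lam n) - 1) * muntzK lam (n - 1) u) := by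
  intro n hn x hx
  obtain ⟨m, rfl⟩ : ∃ m, n = m + 1 := ⟨n - 1, by omega⟩
  have hlam : ∀ j ∈ Finset.Icc 1 m, lam (m + 1) ≠ lam j := fun j hj => by
    rw [Finset.mem_Icc] at hj
    exact hdist _ _ (by omega) hj.1 (by omega)
  rw [Nat.add_sub_cancel, integral_rpow_mul_muntzK lam m hlam hx.1]
  unfold muntzK
  rw [Finset.sum_Icc_succ_top (by omega), muntzA_succ_self,
    prod_div_eq_one_add_sum_muntzA lam hdist m _ hlam]
  have key : ∑ j ∈ Finset.Icc 1 m, muntzA lam (m + 1) j * x ^ lam j =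
      ∑ j ∈ Finset.Icc 1 m, muntzA lam m j * x ^ lam j -
        (2 * lam (m + 1) + 1) * x ^ lam (m + 1) *
          (∑ j ∈ Finset.Icc 1 m, muntzA lam m j / (lam (m + 1) - lam j) +
            ∑ j ∈ Finset.Icc 1 m, muntzA lam m j *
              ((1 - x ^ (lam j - lam (m + 1))) / (lam j - lam (m + 1)))) := by
    rw [← Finset.sum_add_distrib, Finset.mul_sum, ← Finset.sum_sub_distrib]
    refine Finset.sum_congr rfl fun j hj => ?_
    have h1 := sub_ne_zero.2 (hlam j hj)
    have h2 := sub_ne_zero.2 (hlam j hj).symm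
    have hxn : x ^ lam (m + 1) ≠ 0 := (Real.rpow_pos_of_pos hx.1 _).ne'
    rw [muntzA_succ_of_le lam (Finset.mem_Icc.1 hj).2, Real.rpow_sub hx.1]
    field_simp
    ring
  rw [key]
  ring
end

section
/- Let n ≥ 1, let λ_1, …, λ_n be distinct real numbers with λ_j > −1/2, define K_n(x) = ∑_{j=1}^n a_{j,n} x^{λ_j} with a_{j,n} = (∏_{l=1}^n (λ_j + λ_l + 1)) / (∏_{l=1, l≠j}^n (λ_j − λ_l)), and ρ_n(x) = 1 − ∫_1^x K_n(1/r) (dr/r) for x ≥ 1. Then for every real a ≥ 1, ∫_0^1 ρ_n(a/v) ρ_n(1/v) dv = 1. -/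
open Finset MeasureTheory intervalIntegral

/-- `ρ_n(x) = 1 - ∫_1^x K_n(1/r) dr/r` for `x ≥ 1`. -/
noncomputable def muntzRho (lam : ℕ → ℝ) (n : ℕ) (x : ℝ) : ℝ :=
  1 - ∫ r in (1:ℝ)..x, muntzK lam n (1 / r) / r

open scoped Topology

theorem sum_muntzA_div_eq_one {n : ℕ} {lam : ℕ → ℝ}
    (hpos : ∀ j ∈ Finset.Icc 1 n, lam j > -(1/2 : ℝ))
    (hdist : ∀ j ∈ Finset.Icc 1 n, ∀ k ∈ Finset.Icc 1 n, j ≠ k → lam j ≠ lam k)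
    {j : ℕ} (hj : j ∈ Finset.Icc 1 n) :
    ∑ k ∈ Finset.Icc 1 n, muntzA lam n k / (lam j + lam k + 1) = 1 := by
  have hv : Set.InjOn lam (Finset.Icc 1 n : Finset ℕ) := fun a ha b hb hab => by
    by_contra hne
    exact hdist a ha b hb hne hab
  set P : Polynomial ℝ :=
    ∏ l ∈ (Finset.Icc 1 n).erase j, (Polynomial.X - Polynomial.C (-(lam l + 1))) with hP
  have hmon : P.Monic := Polynomial.monic_prod_X_sub_C _ _
  have hdeg : (#(Finset.Icc 1 n) : WithBot ℕ) = P.degree + 1 := by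
    rw [Polynomial.degree_eq_natDegree hmon.ne_zero, hP,
      Polynomial.natDegree_finsetProd_X_sub_C_eq_card, ← Finset.card_erase_add_one hj]
    norm_cast
  refine Eq.trans ?_ ((Lagrange.leadingCoeff_eq_sum hv hdeg).symm.trans hmon)
  refine Finset.sum_congr rfl fun k hk => ?_
  have hjk : lam j + lam k + 1 ≠ 0 := by linarith [hpos j hj, hpos k hk]
  rw [muntzA, ← Finset.mul_prod_erase _ _ hj, hP, Polynomial.eval_prod,
    show lam k + lam j + 1 = lam j + lam k + 1 by ring, mul_div_assoc, mul_div_cancel_left₀ _ hjk]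
  simp only [Polynomial.eval_sub, Polynomial.eval_X, Polynomial.eval_C, sub_neg_eq_add, add_assoc]

theorem continuousOn_muntzK_inv_div (lam : ℕ → ℝ) (n : ℕ) :
    ContinuousOn (fun r => muntzK lam n (1 / r) / r) (Set.Ioi 0) := by
  unfold muntzK
  refine ContinuousOn.div (continuousOn_finsetSum _ fun j _ => ?_) continuousOn_id
    fun x hx => (Set.mem_Ioi.1 hx).ne'
  refine continuousOn_const.mul (ContinuousOn.rpow_const ?_ fun x hx => Or.inl ?_)
  · exact continuousOn_const.div continuousOn_id fun x hx => (Set.mem_Ioi.1 hx).ne'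
  · exact (one_div_pos.2 hx).ne'

theorem intervalIntegrable_muntzK_inv_div (lam : ℕ → ℝ) (n : ℕ) {a b : ℝ} (ha : 0 < a)
    (hb : 0 < b) : IntervalIntegrable (fun r => muntzK lam n (1 / r) / r) volume a b :=
  ((continuousOn_muntzK_inv_div lam n).mono fun _ hx =>
    (lt_min ha hb).trans_le hx.1).intervalIntegrable

theorem hasDerivAt_muntzRho_one_div (lam : ℕ → ℝ) (n : ℕ) {v : ℝ} (hv : 0 < v) :
    HasDerivAt (fun v => muntzRho lam n (1 / v)) (muntzK lam n v / v) v := by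
  have hv' : 0 < 1 / v := one_div_pos.2 hv
  have h1 := intervalIntegral.integral_hasDerivAt_right
    (intervalIntegrable_muntzK_inv_div lam n one_pos hv')
    ((continuousOn_muntzK_inv_div lam n).stronglyMeasurableAtFilter isOpen_Ioi _ hv')
    ((continuousOn_muntzK_inv_div lam n).continuousAt (Ioi_mem_nhds hv'))
  have h2 : HasDerivAt (fun v : ℝ => 1 / v) (-(v ^ 2)⁻¹) v := by
    simpa using hasDerivAt_inv hv.ne'
  have h3 := (HasDerivAt.comp v h1 h2).const_sub 1
  refine h3.congr_deriv ?_
  rw [one_div_one_div]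
  field_simp

/-- Changing variables `r = u / v` splits off the dependence on `a`. -/
theorem muntzRho_div (lam : ℕ → ℝ) (n : ℕ) {a v : ℝ} (ha : 1 ≤ a) (hv : 0 < v) :
    muntzRho lam n (a / v) = muntzRho lam n (1 / v) -
      ∑ j ∈ Finset.Icc 1 n, (muntzA lam n j * ∫ u in (1:ℝ)..a, (1 / u) ^ lam j / u) * v ^ lam j := by
  have ha0 : 0 < a := one_pos.trans_le ha
  have hsplit := intervalIntegral.integral_add_adjacent_intervals
    (intervalIntegrable_muntzK_inv_div lam n one_pos (one_div_pos.2 hv))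
    (intervalIntegrable_muntzK_inv_div lam n (one_div_pos.2 hv) (div_pos ha0 hv))
  have hsub := intervalIntegral.integral_comp_div (a := 1) (b := a)
    (fun r => muntzK lam n (1 / r) / r) hv.ne'
  have hsum : ∫ u in (1:ℝ)..a, muntzK lam n (1 / (u / v)) / (u / v) =
      v * ∑ j ∈ Finset.Icc 1 n,
        (muntzA lam n j * ∫ u in (1:ℝ)..a, (1 / u) ^ lam j / u) * v ^ lam j := by
    have hcongr : ∀ u ∈ Set.uIcc 1 a, muntzK lam n (1 / (u / v)) / (u / v) =
        ∑ j ∈ Finset.Icc 1 n, (v * (muntzA lam n j * v ^ lam j)) * ((1 / u) ^ lam j / u) := by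
      intro u hu
      rw [Set.uIcc_of_le ha] at hu
      have hu0 : 0 < u := one_pos.trans_le hu.1
      rw [muntzK, Finset.sum_div]
      refine Finset.sum_congr rfl fun j _ => ?_
      rw [show 1 / (u / v) = v * (1 / u) by field_simp,
        Real.mul_rpow hv.le (one_div_pos.2 hu0).le]
      field_simp
    rw [intervalIntegral.integral_congr hcongr, intervalIntegral.integral_finsetSum,
      Finset.mul_sum]
    · refine Finset.sum_congr rfl fun j _ => ?_
      rw [intervalIntegral.integral_const_mul]
      ring
    · intro j _
      refine IntervalIntegrable.const_mul (ContinuousOn.intervalIntegrable ?_) _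
      rw [Set.uIcc_of_le ha]
      have hne : ∀ x ∈ Set.Icc 1 a, x ≠ 0 := fun x hx => (one_pos.trans_le hx.1).ne'
      exact ((continuousOn_const.div continuousOn_id hne).rpow_const
        fun x hx => Or.inl (one_div_ne_zero (hne x hx))).div continuousOn_id hne
  rw [hsum, smul_eq_mul] at hsub
  rw [muntzRho, muntzRho, ← hsplit, ← mul_left_cancel₀ hv.ne' hsub]
  ring

theorem exists_abs_muntzRho_one_div_le {n : ℕ} {lam : ℕ → ℝ}
    (hpos : ∀ j ∈ Finset.Icc 1 n, lam j > -(1/2 : ℝ)) :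
    ∃ μ C : ℝ, -(1/2) < μ ∧
      ∀ v ∈ Set.Ioc (0:ℝ) 1, |muntzRho lam n (1 / v)| ≤ C * v ^ μ := by
  obtain ⟨μ, hμ, hμ0, hμl⟩ : ∃ μ : ℝ, -(1/2) < μ ∧ μ < 0 ∧ ∀ j ∈ Finset.Icc 1 n, μ ≤ lam j := by
    have hev : ∀ᶠ μ in 𝓝[>] (-(1/2) : ℝ), ∀ j ∈ Finset.Icc 1 n, μ ≤ lam j :=
      (Filter.eventually_all_finset _).2 fun j hj =>
        nhdsWithin_le_nhds (eventually_le_nhds (hpos j hj))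
    have hneg : ∀ᶠ μ in 𝓝[>] (-(1/2) : ℝ), μ < 0 :=
      nhdsWithin_le_nhds (eventually_lt_nhds (by norm_num))
    obtain ⟨μ, ⟨h1, h2⟩, h3⟩ := ((hev.and hneg).and self_mem_nhdsWithin).exists
    exact ⟨μ, h3, h2, h1⟩
  set A := ∑ j ∈ Finset.Icc 1 n, |muntzA lam n j| with hA
  have hA0 : 0 ≤ A := Finset.sum_nonneg fun _ _ => abs_nonneg _
  refine ⟨μ, 1 + A / -μ, hμ, fun v hv => ?_⟩
  have hx : 1 ≤ 1 / v := (one_le_div hv.1).2 hv.2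
  have hbound : ∀ r ∈ Set.Ioc 1 (1 / v), ‖muntzK lam n (1 / r) / r‖ ≤ A * r ^ (-μ - 1) := by
    intro r hr
    have hr0 : 0 < r := one_pos.trans hr.1
    rw [Real.rpow_sub_one hr0.ne', Real.norm_eq_abs, abs_div, abs_of_pos hr0, ← mul_div_assoc]
    gcongr
    rw [muntzK, hA, Finset.sum_mul]
    refine (Finset.abs_sum_le_sum_abs _ _).trans (Finset.sum_le_sum fun j hj => ?_)
    rw [abs_mul, one_div, Real.inv_rpow hr0.le, ← Real.rpow_neg hr0.le,
      abs_of_pos (Real.rpow_pos_of_pos hr0 _)]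
    gcongr
    · exact hr.1.le
    · exact hμl j hj
  have h0 : (0:ℝ) ∉ Set.uIcc 1 (1 / v) := by
    rw [Set.uIcc_of_le hx]
    exact fun h => absurd h.1 (by norm_num)
  have hint := intervalIntegral.norm_integral_le_of_norm_le (μ := volume) hx
    (Filter.Eventually.of_forall hbound)
    ((intervalIntegral.intervalIntegrable_rpow (Or.inr h0)).const_mul A)
  rw [intervalIntegral.integral_const_mul, integral_rpow (Or.inr ⟨by linarith, h0⟩),
    Real.norm_eq_abs, Real.one_rpow, sub_add_cancel, one_div, Real.inv_rpow hv.1.le,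
    Real.rpow_neg hv.1.le, inv_inv] at hint
  have hone : 1 ≤ v ^ μ := Real.one_le_rpow_of_pos_of_le_one_of_nonpos hv.1 hv.2 hμ0.le
  have hdiv : 0 ≤ A / -μ := div_nonneg hA0 (by linarith)
  rw [muntzRho, one_div]
  calc _ ≤ |(1:ℝ)| + |∫ r in (1:ℝ)..v⁻¹, muntzK lam n (1 / r) / r| := abs_sub _ _
    _ ≤ 1 + A * ((v ^ μ - 1) / -μ) := by rw [abs_one]; gcongr
    _ = 1 + A / -μ * (v ^ μ - 1) := by ring
    _ ≤ (1 + A / -μ) * v ^ μ := by nlinarith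

theorem intervalIntegrable_zero_one_of_abs_le_rpow {f : ℝ → ℝ} {C p : ℝ} (hp : -1 < p)
    (hf : ContinuousOn f (Set.Ioc 0 1)) (hle : ∀ v ∈ Set.Ioc (0:ℝ) 1, |f v| ≤ C * v ^ p) :
    IntervalIntegrable f volume 0 1 := by
  refine ((intervalIntegral.intervalIntegrable_rpow' hp).const_mul C).mono_fun' ?_ ?_
  · rw [Set.uIoc_of_le zero_le_one]
    exact hf.aestronglyMeasurable measurableSet_Ioc
  · rw [Set.uIoc_of_le zero_le_one]
    exact (ae_restrict_iff' measurableSet_Ioc).2 (Filter.Eventually.of_forall hle)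

/-- The fundamental theorem of calculus on `(0, 1]` for a primitive that vanishes at `0`
at a power rate. -/
theorem integral_zero_one_eq_of_abs_le_rpow {f f' : ℝ → ℝ} {C p : ℝ} (hp : 0 < p)
    (hle : ∀ v ∈ Set.Ioc (0:ℝ) 1, |f v| ≤ C * v ^ p) (hf : ∀ v, 0 < v → HasDerivAt f (f' v) v)
    (hf' : IntervalIntegrable f' volume 0 1) : ∫ v in (0:ℝ)..1, f' v = f 1 := by
  have hlim : Filter.Tendsto (fun v : ℝ => C * v ^ p) (𝓝[>] 0) (𝓝 0) := by
    have h := ((Real.continuousAt_rpow_const 0 p (Or.inr hp.le)).tendsto.const_mul C).mono_left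
      (nhdsWithin_le_nhds (s := Set.Ioi 0))
    simpa [Real.zero_rpow hp.ne'] using h
  have h0 : Filter.Tendsto f (𝓝[>] 0) (𝓝 0) := by
    refine squeeze_zero_norm' ?_ hlim
    filter_upwards [Ioc_mem_nhdsGT (zero_lt_one' ℝ)] with v hv using hle v hv
  rw [intervalIntegral.integral_eq_sub_of_hasDerivAt_of_tendsto zero_lt_one
    (fun x hx => hf x hx.1) hf' h0
    ((hf 1 one_pos).continuousAt.tendsto.mono_left nhdsWithin_le_nhds), sub_zero]

theorem continuousOn_muntzRho_one_div (lam : ℕ → ℝ) (n : ℕ) :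
    ContinuousOn (fun v => muntzRho lam n (1 / v)) (Set.Ioc 0 1) :=
  fun _ hv => (hasDerivAt_muntzRho_one_div lam n hv.1).continuousAt.continuousWithinAt

theorem intervalIntegrable_rpow_mul_muntzRho {n : ℕ} {lam : ℕ → ℝ}
    (hpos : ∀ j ∈ Finset.Icc 1 n, lam j > -(1/2 : ℝ)) {p : ℝ} (hp : -(1/2) < p) :
    IntervalIntegrable (fun v => v ^ p * muntzRho lam n (1 / v)) volume 0 1 := by
  obtain ⟨μ, C, hμ, hC⟩ := exists_abs_muntzRho_one_div_le hpos
  refine intervalIntegrable_zero_one_of_abs_le_rpow (C := C) (p := p + μ) (by linarith)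
    ((continuousOn_id.rpow_const fun v hv => Or.inl hv.1.ne').mul
      (continuousOn_muntzRho_one_div lam n)) fun v hv => ?_
  have hvp := Real.rpow_pos_of_pos hv.1 p
  rw [abs_mul, abs_of_pos hvp, Real.rpow_add hv.1]
  calc _ ≤ v ^ p * (C * v ^ μ) := by gcongr; exact hC v hv
    _ = _ := by ring

theorem intervalIntegrable_muntzRho_sq {n : ℕ} {lam : ℕ → ℝ}
    (hpos : ∀ j ∈ Finset.Icc 1 n, lam j > -(1/2 : ℝ)) :
    IntervalIntegrable (fun v => muntzRho lam n (1 / v) ^ 2) volume 0 1 := by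
  obtain ⟨μ, C, hμ, hC⟩ := exists_abs_muntzRho_one_div_le hpos
  refine intervalIntegrable_zero_one_of_abs_le_rpow (C := C ^ 2) (p := μ + μ) (by linarith)
    ((continuousOn_muntzRho_one_div lam n).pow 2) fun v hv => ?_
  rw [abs_pow, Real.rpow_add hv.1]
  calc _ ≤ (C * v ^ μ) ^ 2 := by gcongr; exact hC v hv
    _ = _ := by ring

/-- `v ↦ ρ_n(1/v)` is orthogonal to `v ^ λ_j` on `[0, 1]`. -/
theorem integral_rpow_mul_muntzRho_eq_zero {n : ℕ} {lam : ℕ → ℝ}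
    (hpos : ∀ j ∈ Finset.Icc 1 n, lam j > -(1/2 : ℝ))
    (hdist : ∀ j ∈ Finset.Icc 1 n, ∀ k ∈ Finset.Icc 1 n, j ≠ k → lam j ≠ lam k)
    {j : ℕ} (hj : j ∈ Finset.Icc 1 n) :
    ∫ v in (0:ℝ)..1, v ^ lam j * muntzRho lam n (1 / v) = 0 := by
  obtain ⟨μ, C, hμ, hC⟩ := exists_abs_muntzRho_one_div_le hpos
  have hlj := hpos j hj
  have hpow : ∀ k ∈ Finset.Icc 1 n, IntervalIntegrable
      (fun v : ℝ => muntzA lam n k * v ^ (lam j + lam k)) volume 0 1 := fun k hk =>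
    (intervalIntegral.intervalIntegrable_rpow' (by linarith [hpos k hk])).const_mul _
  have hint1 := (intervalIntegrable_rpow_mul_muntzRho hpos hlj).const_mul (lam j + 1)
  have hint2 : IntervalIntegrable (fun v : ℝ => ∑ k ∈ Finset.Icc 1 n,
      muntzA lam n k * v ^ (lam j + lam k)) volume 0 1 := by
    simpa only [Finset.sum_fn] using IntervalIntegrable.sum _ hpow
  have hftc := integral_zero_one_eq_of_abs_le_rpow (C := C) (p := lam j + 1 + μ)
    (f := fun v => v ^ (lam j + 1) * muntzRho lam n (1 / v)) (by linarith)
    (fun v hv => by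
      have hvp := Real.rpow_pos_of_pos hv.1 (lam j + 1)
      rw [abs_mul, abs_of_pos hvp, Real.rpow_add hv.1 (lam j + 1) μ]
      calc _ ≤ v ^ (lam j + 1) * (C * v ^ μ) := by gcongr; exact hC v hv
        _ = _ := by ring)
    (fun v hv => by
      refine ((Real.hasDerivAt_rpow_const (Or.inl hv.ne')).mul
        (hasDerivAt_muntzRho_one_div lam n hv)).congr_deriv (g' := (lam j + 1) *
          (v ^ lam j * muntzRho lam n (1 / v)) +
          ∑ k ∈ Finset.Icc 1 n, muntzA lam n k * v ^ (lam j + lam k)) ?_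
      have hK : ∑ k ∈ Finset.Icc 1 n, muntzA lam n k * v ^ (lam j + lam k) =
          v ^ lam j * muntzK lam n v := by
        rw [muntzK, Finset.mul_sum]
        exact Finset.sum_congr rfl fun k _ => by rw [Real.rpow_add hv]; ring
      rw [hK, add_sub_cancel_right, Real.rpow_add_one hv.ne']
      field_simp)
    (hint1.add hint2)
  have hsum : ∫ v in (0:ℝ)..1, ∑ k ∈ Finset.Icc 1 n, muntzA lam n k * v ^ (lam j + lam k) = 1 := by
    rw [intervalIntegral.integral_finsetSum hpow]
    refine Eq.trans ?_ (sum_muntzA_div_eq_one hpos hdist hj)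
    refine Finset.sum_congr rfl fun k hk => ?_
    have hne : lam j + lam k + 1 ≠ 0 := by linarith [hpos k hk]
    rw [intervalIntegral.integral_const_mul, integral_rpow (Or.inl (by linarith [hpos k hk])),
      Real.one_rpow, Real.zero_rpow hne, sub_zero, mul_one_div]
  rw [intervalIntegral.integral_add hint1 hint2, intervalIntegral.integral_const_mul, hsum] at hftc
  have hone : muntzRho lam n 1 = 1 := by simp [muntzRho]
  simp only [Real.one_rpow, div_one, hone, one_mul, add_eq_right, mul_eq_zero] at hftc
  exact hftc.resolve_left (by linarith)

theorem integral_muntzRho_sq_eq_one {n : ℕ} {lam : ℕ → ℝ}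
    (hpos : ∀ j ∈ Finset.Icc 1 n, lam j > -(1/2 : ℝ))
    (hdist : ∀ j ∈ Finset.Icc 1 n, ∀ k ∈ Finset.Icc 1 n, j ≠ k → lam j ≠ lam k) :
    ∫ v in (0:ℝ)..1, muntzRho lam n (1 / v) ^ 2 = 1 := by
  obtain ⟨μ, C, hμ, hC⟩ := exists_abs_muntzRho_one_div_le hpos
  have hterm : ∀ k ∈ Finset.Icc 1 n, IntervalIntegrable
      (fun v : ℝ => 2 * muntzA lam n k * (v ^ lam k * muntzRho lam n (1 / v))) volume 0 1 :=
    fun k hk => (intervalIntegrable_rpow_mul_muntzRho hpos (hpos k hk)).const_mul _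
  have hint1 := intervalIntegrable_muntzRho_sq hpos
  have hint2 : IntervalIntegrable (fun v : ℝ => ∑ k ∈ Finset.Icc 1 n,
      2 * muntzA lam n k * (v ^ lam k * muntzRho lam n (1 / v))) volume 0 1 := by
    simpa only [Finset.sum_fn] using IntervalIntegrable.sum _ hterm
  have hftc := integral_zero_one_eq_of_abs_le_rpow (C := C ^ 2) (p := 1 + (μ + μ))
    (f := fun v => v * muntzRho lam n (1 / v) ^ 2) (by linarith)
    (fun v hv => by
      rw [abs_mul, abs_of_pos hv.1, abs_pow, Real.rpow_add hv.1, Real.rpow_add hv.1,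
        Real.rpow_one]
      have hv0 := hv.1
      calc _ ≤ v * (C * v ^ μ) ^ 2 := by gcongr; exact hC v hv
        _ = _ := by ring)
    (fun v hv => by
      refine ((hasDerivAt_id v).mul
        ((hasDerivAt_muntzRho_one_div lam n hv).pow 2)).congr_deriv
          (g' := muntzRho lam n (1 / v) ^ 2 + ∑ k ∈ Finset.Icc 1 n,
            2 * muntzA lam n k * (v ^ lam k * muntzRho lam n (1 / v))) ?_
      have hK : ∑ k ∈ Finset.Icc 1 n, 2 * muntzA lam n k * (v ^ lam k * muntzRho lam n (1 / v)) =
          2 * muntzK lam n v * muntzRho lam n (1 / v) := by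
        rw [muntzK, Finset.mul_sum, Finset.sum_mul]
        exact Finset.sum_congr rfl fun k _ => by ring
      rw [hK]
      simp only [id, Pi.pow_apply]
      field_simp
      ring)
    (hint1.add hint2)
  have hsum : ∫ v in (0:ℝ)..1, ∑ k ∈ Finset.Icc 1 n,
      2 * muntzA lam n k * (v ^ lam k * muntzRho lam n (1 / v)) = 0 := by
    rw [intervalIntegral.integral_finsetSum hterm]
    refine Finset.sum_eq_zero fun k hk => ?_
    rw [intervalIntegral.integral_const_mul, integral_rpow_mul_muntzRho_eq_zero hpos hdist hk,
      mul_zero]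
  rw [intervalIntegral.integral_add hint1 hint2, hsum, add_zero] at hftc
  rw [hftc]
  simp [muntzRho]

theorem muntzRho_covariance (n : ℕ) (hn : 1 ≤ n) (lam : ℕ → ℝ)
    (hpos : ∀ j ∈ Finset.Icc 1 n, lam j > -(1/2 : ℝ))
    (hdist : ∀ j ∈ Finset.Icc 1 n, ∀ k ∈ Finset.Icc 1 n, j ≠ k → lam j ≠ lam k) :
    ∀ a : ℝ, 1 ≤ a →
      (∫ v in (0:ℝ)..1, muntzRho lam n (a / v) * muntzRho lam n (1 / v)) = 1 := by
  intro a ha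
  set c : ℕ → ℝ := fun j => muntzA lam n j * ∫ u in (1:ℝ)..a, (1 / u) ^ lam j / u with hc
  have hterm : ∀ k ∈ Finset.Icc 1 n, IntervalIntegrable
      (fun v : ℝ => c k * (v ^ lam k * muntzRho lam n (1 / v))) volume 0 1 :=
    fun k hk => (intervalIntegrable_rpow_mul_muntzRho hpos (hpos k hk)).const_mul _
  have hint : IntervalIntegrable (fun v : ℝ => ∑ k ∈ Finset.Icc 1 n,
      c k * (v ^ lam k * muntzRho lam n (1 / v))) volume 0 1 := by
    simpa only [Finset.sum_fn] using IntervalIntegrable.sum _ hterm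
  have hcongr : ∫ v in (0:ℝ)..1, muntzRho lam n (a / v) * muntzRho lam n (1 / v) =
      ∫ v in (0:ℝ)..1, (muntzRho lam n (1 / v) ^ 2 -
        ∑ k ∈ Finset.Icc 1 n, c k * (v ^ lam k * muntzRho lam n (1 / v))) := by
    refine intervalIntegral.integral_congr_ae (Filter.Eventually.of_forall fun v hv => ?_)
    rw [Set.uIoc_of_le zero_le_one] at hv
    rw [muntzRho_div lam n ha hv.1, sub_mul, Finset.sum_mul, sq]
    simp only [hc, mul_assoc]
  rw [hcongr, intervalIntegral.integral_sub (intervalIntegrable_muntzRho_sq hpos) hint,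
    integral_muntzRho_sq_eq_one hpos hdist, intervalIntegral.integral_finsetSum hterm,
    Finset.sum_eq_zero, sub_zero]
  intro k hk
  rw [intervalIntegral.integral_const_mul, integral_rpow_mul_muntzRho_eq_zero hpos hdist hk,
    mul_zero]
end

section
/- Let λ_1, λ_2, … be distinct real numbers with λ_j > −1/2, and define K_n(x) = ∑_{j=1}^n a_{j,n} x^{λ_j} on (0,1], where a_{j,n} = (∏_{l=1}^n (λ_j + λ_l + 1)) / (∏_{l=1, l≠j}^n (λ_j − λ_l)). Then for all integers 0 ≤ m < n, ∫_0^1 (K_n(u) − K_m(u))² du = ∑_{j=m+1}^n (1 + 2λ_j) (with convention K_0 ≡ 0). In particular, if ∑_{j=1}^∞ (1 + 2λ_j) < ∞ then (K_n) is a Cauchy sequence in L²[0,1]. -/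
open Finset MeasureTheory intervalIntegral

theorem sum_prod_erase_sub_div_prod_erase_sub {F ι : Type*} [Field F] [DecidableEq ι]
    {s : Finset ι} {v : ι → F} (hv : Set.InjOn v s) (w : ι → F) {k : ι} (hk : k ∈ s) :
    ∑ i ∈ s, (∏ l ∈ s.erase k, (v i - w l)) / ∏ l ∈ s.erase i, (v i - v l) = 1 := by
  set P : Polynomial F := ∏ l ∈ s.erase k, (Polynomial.X - Polynomial.C (w l)) with hP
  have hmonic : P.Monic := Polynomial.monic_prod_X_sub_C _ _
  have hnat : P.natDegree = #s - 1 := by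
    rw [hP, Polynomial.natDegree_finsetProd_X_sub_C_eq_card, card_erase_of_mem hk]
  have hcard : 0 < #s := card_pos.mpr ⟨k, hk⟩
  have hdeg : P.degree < #s := by
    rw [Polynomial.degree_eq_natDegree hmonic.ne_zero, hnat]
    exact_mod_cast Nat.sub_lt hcard one_pos
  have key := Lagrange.coeff_eq_sum hv hdeg
  rw [← hnat, hmonic.coeff_natDegree] at key
  simpa [hP, Polynomial.eval_prod] using key.symm

theorem sum_prod_sub_div_prod_erase_sub {F ι : Type*} [Field F] [DecidableEq ι]
    {s : Finset ι} {v : ι → F} (hv : Set.InjOn v s) (w : ι → F) :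
    ∑ i ∈ s, (∏ l ∈ s, (v i - w l)) / ∏ l ∈ s.erase i, (v i - v l) =
      ∑ i ∈ s, (v i - w i) := by
  rcases s.eq_empty_or_nonempty with rfl | hs
  · simp
  have hmonic (u : ι → F) : (∏ l ∈ s, (Polynomial.X - Polynomial.C (u l))).Monic :=
    Polynomial.monic_prod_X_sub_C _ _
  have hdegree (u : ι → F) : (∏ l ∈ s, (Polynomial.X - Polynomial.C (u l))).degree = (#s : WithBot ℕ) := by
    rw [Polynomial.degree_eq_natDegree (hmonic u).ne_zero,
      Polynomial.natDegree_finsetProd_X_sub_C_eq_card]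
  have hdeg : (∏ l ∈ s, (Polynomial.X - Polynomial.C (w l)) -
      ∏ l ∈ s, (Polynomial.X - Polynomial.C (v l))).degree < (#s : WithBot ℕ) := by
    rw [← hdegree w]
    exact Polynomial.degree_sub_lt_left ((hdegree w).trans (hdegree v).symm)
      (hmonic w).ne_zero ((hmonic w).leadingCoeff.trans (hmonic v).leadingCoeff.symm)
  have key := Lagrange.coeff_eq_sum hv hdeg
  rw [Polynomial.coeff_sub, Polynomial.prod_X_sub_C_coeff_card_pred _ _ hs.card_pos,
    Polynomial.prod_X_sub_C_coeff_card_pred _ _ hs.card_pos] at key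
  rw [sum_sub_distrib, ← neg_add_eq_sub, ← sub_neg_eq_add, key]
  refine sum_congr rfl fun i hi => ?_
  have hzero : ∏ l ∈ s, (v i - v l) = 0 := prod_eq_zero hi (sub_self _)
  simp [Polynomial.eval_prod, hzero]

theorem sum_muntzA_div {lam : ℕ → ℝ} {n k : ℕ} (hinj : Set.InjOn lam (Icc 1 n))
    (hpos : ∀ j ∈ Icc 1 n, -(1 / 2 : ℝ) < lam j) (hk : k ∈ Icc 1 n) :
    ∑ j ∈ Icc 1 n, muntzA lam n j / (lam j + lam k + 1) = 1 := by
  refine (sum_congr rfl fun j hj => ?_).trans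
    (sum_prod_erase_sub_div_prod_erase_sub hinj (fun l => -lam l - 1) hk)
  have hne : lam j + lam k + 1 ≠ 0 := by linarith [hpos j hj, hpos k hk]
  rw [muntzA, ← mul_prod_erase _ _ hk, div_right_comm, mul_div_cancel_left₀ _ hne]
  congr 1
  exact prod_congr rfl fun l _ => by ring

theorem sum_muntzA {lam : ℕ → ℝ} {n : ℕ} (hinj : Set.InjOn lam (Icc 1 n)) :
    ∑ j ∈ Icc 1 n, muntzA lam n j = ∑ j ∈ Icc 1 n, (1 + 2 * lam j) := by
  have key := sum_prod_sub_div_prod_erase_sub hinj (fun l => -lam l - 1)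
  calc ∑ j ∈ Icc 1 n, muntzA lam n j = _ := sum_congr rfl fun j _ => by
        rw [muntzA]
        congr 1
        exact prod_congr rfl fun l _ => by ring
    _ = _ := key
    _ = _ := sum_congr rfl fun j _ => by ring

theorem muntzK_mul_muntzK_eq_sum (lam : ℕ → ℝ) (m n : ℕ) {x : ℝ} (hx : 0 < x) :
    muntzK lam n x * muntzK lam m x = ∑ k ∈ Icc 1 m, ∑ j ∈ Icc 1 n,
      muntzA lam m k * muntzA lam n j * x ^ (lam j + lam k) := by
  rw [mul_comm, muntzK, muntzK, sum_mul_sum]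
  refine sum_congr rfl fun k _ => sum_congr rfl fun j _ => ?_
  rw [Real.rpow_add hx]
  ring

theorem intervalIntegrable_const_mul_rpow_add {lam : ℕ → ℝ}
    (hpos : ∀ j, 1 ≤ j → -(1 / 2 : ℝ) < lam j)
    {j k : ℕ} (hj : 1 ≤ j) (hk : 1 ≤ k) (c : ℝ) :
    IntervalIntegrable (fun x : ℝ => c * x ^ (lam j + lam k)) volume 0 1 :=
  (intervalIntegrable_rpow' (by linarith [hpos j hj, hpos k hk])).const_mul c

theorem intervalIntegrable_muntzK_mul {lam : ℕ → ℝ}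
    (hpos : ∀ j, 1 ≤ j → -(1 / 2 : ℝ) < lam j) (m n : ℕ) :
    IntervalIntegrable (fun x => muntzK lam n x * muntzK lam m x) volume 0 1 := by
  have hsum : IntervalIntegrable (∑ k ∈ Icc 1 m, ∑ j ∈ Icc 1 n,
      fun x : ℝ => muntzA lam m k * muntzA lam n j * x ^ (lam j + lam k)) volume 0 1 :=
    .sum _ fun k hk => .sum _ fun j hj =>
      intervalIntegrable_const_mul_rpow_add hpos (mem_Icc.mp hj).1 (mem_Icc.mp hk).1 _
  refine hsum.congr fun x hx => ?_
  rw [Set.uIoc_of_le zero_le_one] at hx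
  simp [muntzK_mul_muntzK_eq_sum lam m n hx.1]

theorem integral_muntzK_mul {lam : ℕ → ℝ}
    (hpos : ∀ j, 1 ≤ j → -(1 / 2 : ℝ) < lam j)
    (hinj : Set.InjOn lam (Set.Ici 1)) {m n : ℕ} (hmn : m ≤ n) :
    ∫ x in (0 : ℝ)..1, muntzK lam n x * muntzK lam m x = ∑ j ∈ Icc 1 m, (1 + 2 * lam j) := by
  have hinj' (N : ℕ) : Set.InjOn lam (Icc 1 N) :=
    hinj.mono fun j hj => (mem_Icc.mp (mem_coe.mp hj)).1
  have hint {k j : ℕ} (hk : k ∈ Icc 1 m) (hj : j ∈ Icc 1 n) (c : ℝ) :=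
    intervalIntegrable_const_mul_rpow_add hpos (mem_Icc.mp hj).1 (mem_Icc.mp hk).1 c
  have hcongr : ∀ᵐ x : ℝ, x ∈ Set.uIoc 0 1 → muntzK lam n x * muntzK lam m x =
      ∑ k ∈ Icc 1 m, ∑ j ∈ Icc 1 n,
        muntzA lam m k * muntzA lam n j * x ^ (lam j + lam k) := by
    refine ae_of_all _ fun x hx => ?_
    rw [Set.uIoc_of_le zero_le_one] at hx
    exact muntzK_mul_muntzK_eq_sum lam m n hx.1
  rw [intervalIntegral.integral_congr_ae hcongr, ← sum_muntzA (hinj' m), intervalIntegral.integral_finsetSum]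
  · refine sum_congr rfl fun k hk => ?_
    rw [intervalIntegral.integral_finsetSum fun j hj => hint hk hj _]
    have hk' : k ∈ Icc 1 n := Icc_subset_Icc_right hmn hk
    have hone := sum_muntzA_div (hinj' n) (fun j hj => hpos j (mem_Icc.mp hj).1) hk'
    refine Eq.trans ?_ ((mul_sum _ _ _).symm.trans (by rw [hone, mul_one]))
    refine sum_congr rfl fun j hj => ?_
    have hgt : -1 < lam j + lam k := by
      linarith [hpos j (mem_Icc.mp hj).1, hpos k (mem_Icc.mp hk).1]
    rw [intervalIntegral.integral_const_mul, integral_rpow (Or.inl hgt), Real.one_rpow,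
      Real.zero_rpow (by linarith)]
    ring
  · intro k hk
    simpa only [sum_fn] using
      IntervalIntegrable.sum _ fun j hj => hint hk hj (muntzA lam m k * muntzA lam n j)

theorem integral_muntzK_sub_sq {lam : ℕ → ℝ}
    (hpos : ∀ j, 1 ≤ j → -(1 / 2 : ℝ) < lam j)
    (hinj : Set.InjOn lam (Set.Ici 1)) {m n : ℕ} (hmn : m ≤ n) :
    ∫ x in (0 : ℝ)..1, (muntzK lam n x - muntzK lam m x) ^ 2 =
      ∑ j ∈ Icc 1 n, (1 + 2 * lam j) - ∑ j ∈ Icc 1 m, (1 + 2 * lam j) := by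
  have hexpand (x : ℝ) : (muntzK lam n x - muntzK lam m x) ^ 2 =
      muntzK lam n x * muntzK lam n x - 2 * (muntzK lam n x * muntzK lam m x) +
        muntzK lam m x * muntzK lam m x := by ring
  have hnn := intervalIntegrable_muntzK_mul hpos n n
  have hnm := (intervalIntegrable_muntzK_mul hpos m n).const_mul 2
  have hmm := intervalIntegrable_muntzK_mul hpos m m
  simp_rw [hexpand]
  rw [intervalIntegral.integral_add (hnn.sub hnm) hmm, intervalIntegral.integral_sub hnn hnm,
    intervalIntegral.integral_const_mul, integral_muntzK_mul hpos hinj le_rfl,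
    integral_muntzK_mul hpos hinj hmn, integral_muntzK_mul hpos hinj le_rfl]
  ring

theorem muntzK_L2_cauchy (lam : ℕ → ℝ)
    (hpos : ∀ j, 1 ≤ j → lam j > -(1/2 : ℝ))
    (hdist : ∀ j k, 1 ≤ j → 1 ≤ k → j ≠ k → lam j ≠ lam k) :
    (∀ m n : ℕ, m < n →
      (∫ u in (0:ℝ)..1, (muntzK lam n u - muntzK lam m u) ^ 2)
        = ∑ j ∈ Finset.Icc (m + 1) n, (1 + 2 * lam j)) ∧
    ((Summable fun j : ℕ => 1 + 2 * lam (j + 1)) →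
      ∀ ε : ℝ, 0 < ε → ∃ N : ℕ, ∀ m ≥ N, ∀ n ≥ N,
        (∫ u in (0:ℝ)..1, (muntzK lam n u - muntzK lam m u) ^ 2) < ε) := by
  have hinj : Set.InjOn lam (Set.Ici 1) := fun j hj k hk hjk => by
    by_contra hne
    exact hdist j k hj hk hne hjk
  refine ⟨fun m n hmn => ?_, fun hsum ε hε => ?_⟩
  · have hdisj : Icc 1 n = Icc 1 m ∪ Icc (m + 1) n := by
      ext j
      simp only [mem_union, mem_Icc]
      omega
    rw [integral_muntzK_sub_sq hpos hinj hmn.le, hdisj, sum_union, add_sub_cancel_left]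
    rw [disjoint_left]
    intro j
    simp only [mem_Icc]
    omega
  · have hpartial (n : ℕ) : ∑ j ∈ Icc 1 n, (1 + 2 * lam j) =
        ∑ j ∈ range n, (1 + 2 * lam (j + 1)) := by
      rw [range_eq_Ico, sum_Ico_add' (fun j => 1 + 2 * lam j) 0 n 1]
      rfl
    obtain ⟨N, hN⟩ := Metric.cauchySeq_iff.mp hsum.hasSum.tendsto_sum_nat.cauchySeq ε hε
    refine ⟨N, fun m hm n hn => ?_⟩
    rcases le_total m n with hmn | hnm
    · rw [integral_muntzK_sub_sq hpos hinj hmn, hpartial, hpartial]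
      exact (le_abs_self _).trans_lt (hN n hn m hm)
    · simp_rw [sub_sq_comm (muntzK lam n _)]
      rw [integral_muntzK_sub_sq hpos hinj hnm, hpartial, hpartial]
      exact (le_abs_self _).trans_lt (hN m hm n hn)
end
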